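/- arXiv:2305.02749 — 3 statements merged into one kernel-verified Lean document; each statement's English description precedes it below -/
import Mathlib

section
/- Let A, B, C, D, E, V be finite nonempty types and let p be a probability mass function with full support on A × B × C × D × E × V. Assume: (i) for all a, b, c, d, e, v, p(v | a,b,c,d,e) = p(v | a,b,c) (the ground-truth parents of V are exactly the A-, B-, C-coordinates); (ii) for all a, d, v, p(v | a,d) = p(v | a) (the false parent D carries no information about V beyond A); and (iii) for all a, b, d, e, v, p(v | a,b,d,e) = p(v | a,b) (the false parents D and E carry no information about V beyond A and B). Then the expected KL divergence from the ground-truth posterior to the prediction using the smaller parent set {A,D} is at least that using the larger parent set {A,B,D,E}: Σ_{a,b,c,d,e} p(a,b,c,d,e) · KL(p(·|a,b,c) ‖ p(·|a,d)) ≥ Σ_{a,b,c,d,e} p(a,b,c,d,e) · KL(p(·|a,b,c) ‖ p(·|a,b,d,e)). -/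
open Finset

variable {A B C D E V : Type*} [Fintype A] [Fintype B] [Fintype C] [Fintype D] [Fintype E]
  [Fintype V]

/-- the joint marginal `p(a,b,c,d,e)` -/
noncomputable def margABCDE (p : A × B × C × D × E × V → ℝ) (a : A) (b : B) (c : C) (d : D)
    (e : E) : ℝ :=
  ∑ v, p (a, b, c, d, e, v)

/-- the conditional `p(v|a,b,c,d,e)` -/
noncomputable def condABCDE (p : A × B × C × D × E × V → ℝ) (a : A) (b : B) (c : C) (d : D)
    (e : E) (v : V) : ℝ :=
  p (a, b, c, d, e, v) / ∑ v', p (a, b, c, d, e, v')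

/-- the conditional `p(v|a,b,c)` -/
noncomputable def condABC (p : A × B × C × D × E × V → ℝ) (a : A) (b : B) (c : C) (v : V) : ℝ :=
  (∑ d, ∑ e, p (a, b, c, d, e, v)) / ∑ d, ∑ e, ∑ v', p (a, b, c, d, e, v')

/-- the conditional `p(v|a,d)` -/
noncomputable def condAD (p : A × B × C × D × E × V → ℝ) (a : A) (d : D) (v : V) : ℝ :=
  (∑ b, ∑ c, ∑ e, p (a, b, c, d, e, v)) / ∑ b, ∑ c, ∑ e, ∑ v', p (a, b, c, d, e, v')

/-- the conditional `p(v|a)` -/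
noncomputable def condA (p : A × B × C × D × E × V → ℝ) (a : A) (v : V) : ℝ :=
  (∑ b, ∑ c, ∑ d, ∑ e, p (a, b, c, d, e, v)) /
    ∑ b, ∑ c, ∑ d, ∑ e, ∑ v', p (a, b, c, d, e, v')

/-- the conditional `p(v|a,b,d,e)` -/
noncomputable def condABDE (p : A × B × C × D × E × V → ℝ) (a : A) (b : B) (d : D) (e : E)
    (v : V) : ℝ :=
  (∑ c, p (a, b, c, d, e, v)) / ∑ c, ∑ v', p (a, b, c, d, e, v')

/-- the conditional `p(v|a,b)` -/
noncomputable def condAB (p : A × B × C × D × E × V → ℝ) (a : A) (b : B) (v : V) : ℝ :=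
  (∑ c, ∑ d, ∑ e, p (a, b, c, d, e, v)) / ∑ c, ∑ d, ∑ e, ∑ v', p (a, b, c, d, e, v')

/-!
Fix `a, b, d, e` and let `c` vary. Since `p(·|a,b,c) = p(·|a,b,c,d,e)`, the ground-truth
posteriors, weighted by `p(a,b,c,d,e)`, average to `p(·|a,b,d,e)`. By the compensation identity,
the mean KL divergence from a weighted family of distributions to any distribution `r` exceeds the
mean divergence to the average of the family by the divergence from that average to `r`, which is
nonnegative by the Gibbs inequality. Taking `r = p(·|a,d)` and summing over `a, b, d, e` gives the
theorem.
-/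

variable {ι : Type*} [Fintype ι]

/-- The probability distribution proportional to the weight `w`, used to express all conditional
distributions uniformly. It is zero if `w` has total mass zero. -/
noncomputable def normalized (w : V → ℝ) (v : V) : ℝ :=
  w v / ∑ v', w v'

/-- The Kullback–Leibler divergence `∑ v, q v log (q v / r v)` between weights on a finite type.
A summand with `r v = 0` is zero by convention, so this is the usual divergence only if `q`
vanishes wherever `r` does. -/
noncomputable def finiteKL (q r : V → ℝ) : ℝ :=
  ∑ v, q v * Real.log (q v / r v)

section Normalized

variable {w : V → ℝ}

lemma normalized_nonneg (hw : 0 ≤ w) : 0 ≤ normalized w :=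
  fun v => div_nonneg (hw v) (sum_nonneg fun v' _ => hw v')

lemma sum_normalized (hmass : ∑ v, w v ≠ 0) : ∑ v, normalized w v = 1 := by
  simp only [normalized, ← sum_div, div_self hmass]

lemma sum_normalized_le_one (w : V → ℝ) : ∑ v, normalized w v ≤ 1 := by
  simp only [normalized, ← sum_div, div_self_le_one]

lemma sum_mul_normalized (hw : 0 ≤ w) (v : V) : (∑ v', w v') * normalized w v = w v :=
  mul_div_cancel_of_imp' fun hmass =>
    (sum_eq_zero_iff_of_nonneg fun v' _ => hw v').1 hmass v (mem_univ v)

lemma eq_zero_of_normalized_eq_zero (hw : 0 ≤ w) {v : V} (h : normalized w v = 0) : w v = 0 := by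
  rw [← sum_mul_normalized hw v, h, mul_zero]

lemma eq_zero_of_normalized_sum_eq_zero {w : ι → V → ℝ} (hw : ∀ i, 0 ≤ w i) {v : V}
    (h : normalized (∑ i, w i) v = 0) (i : ι) : w i v = 0 := by
  have hsum : ∑ i, w i v = 0 := by
    simpa only [Finset.sum_apply] using eq_zero_of_normalized_eq_zero (sum_nonneg fun i _ => hw i) h
  exact (sum_eq_zero_iff_of_nonneg fun i _ => hw i v).1 hsum i (mem_univ i)

end Normalized

section FiniteKL

lemma sub_le_mul_log_div {x y : ℝ} (hx : 0 ≤ x) (hy : 0 ≤ y) (hxy : y = 0 → x = 0) :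
    x - y ≤ x * Real.log (x / y) := by
  rcases eq_or_ne y 0 with rfl | hy0
  · simp [hxy rfl]
  · have hklFun : 0 ≤ y * InformationTheory.klFun (x / y) :=
      mul_nonneg hy (InformationTheory.klFun_nonneg (div_nonneg hx hy))
    have hexpand : y * InformationTheory.klFun (x / y) = x * Real.log (x / y) + y - x := by
      rw [InformationTheory.klFun]
      field_simp
    linarith

lemma finiteKL_nonneg {q r : V → ℝ} (hq : 0 ≤ q) (hr : 0 ≤ r) (hqr : ∀ v, r v = 0 → q v = 0)
    (hmass : ∑ v, r v ≤ ∑ v, q v) : 0 ≤ finiteKL q r :=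
  calc 0 ≤ ∑ v, (q v - r v) := by rwa [sum_sub_distrib, sub_nonneg]
    _ ≤ finiteKL q r := sum_le_sum fun v _ => sub_le_mul_log_div (hq v) (hr v) (hqr v)

lemma sum_mul_finiteKL_normalized {w : V → ℝ} (hw : 0 ≤ w) (r : V → ℝ) :
    (∑ v, w v) * finiteKL (normalized w) r = ∑ v, w v * Real.log (normalized w v / r v) := by
  simp only [finiteKL, mul_sum, ← mul_assoc, sum_mul_normalized hw]

lemma sum_mul_finiteKL_normalized_nonneg {w r : V → ℝ} (hw : 0 ≤ w) (hr : 0 ≤ r)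
    (hr_sum : ∑ v, r v ≤ 1) (hwr : ∀ v, r v = 0 → w v = 0) :
    0 ≤ (∑ v, w v) * finiteKL (normalized w) r := by
  rcases eq_or_ne (∑ v, w v) 0 with hmass | hmass
  · rw [hmass, zero_mul]
  · refine mul_nonneg (sum_nonneg fun v _ => hw v)
      (finiteKL_nonneg (normalized_nonneg hw) hr (fun v hv => ?_) ?_)
    · rw [normalized, hwr v hv, zero_div]
    · rwa [sum_normalized hmass]

lemma finiteKL_compensation_identity {w : ι → V → ℝ} {r : V → ℝ} (hw : ∀ i, 0 ≤ w i)
    (hwr : ∀ i v, r v = 0 → w i v = 0) :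
    ∑ i, (∑ v, w i v) * finiteKL (normalized (w i)) r =
      ∑ i, (∑ v, w i v) * finiteKL (normalized (w i)) (normalized (∑ i, w i)) +
        (∑ v, (∑ i, w i) v) * finiteKL (normalized (∑ i, w i)) r := by
  set avg := normalized (∑ i, w i) with havg
  have hlog (i : ι) (v : V) : w i v * Real.log (normalized (w i) v / r v) =
      w i v * Real.log (normalized (w i) v / avg v) + w i v * Real.log (avg v / r v) := by
    rcases eq_or_ne (w i v) 0 with h0 | h0
    · simp only [h0, zero_mul, add_zero]
    have hi : normalized (w i) v ≠ 0 := mt (eq_zero_of_normalized_eq_zero (hw i)) h0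
    have havg0 : avg v ≠ 0 := fun h => h0 (eq_zero_of_normalized_sum_eq_zero hw h i)
    have hr0 : r v ≠ 0 := mt (hwr i v) h0
    rw [← mul_add, ← Real.log_mul (div_ne_zero hi havg0) (div_ne_zero havg0 hr0),
      div_mul_div_cancel₀ havg0]
  have hcross : (∑ v, (∑ i, w i) v) * finiteKL avg r =
      ∑ i, ∑ v, w i v * Real.log (avg v / r v) := by
    rw [havg, sum_mul_finiteKL_normalized (sum_nonneg fun i _ => hw i), sum_comm]
    simp only [Finset.sum_apply, sum_mul]
  simp only [hcross, sum_mul_finiteKL_normalized (hw _), hlog, sum_add_distrib]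

lemma sum_mul_finiteKL_normalized_sum_le {w : ι → V → ℝ} {r : V → ℝ} (hw : ∀ i, 0 ≤ w i)
    (hr : 0 ≤ r) (hr_sum : ∑ v, r v ≤ 1) (hwr : ∀ i v, r v = 0 → w i v = 0) :
    ∑ i, (∑ v, w i v) * finiteKL (normalized (w i)) (normalized (∑ i, w i)) ≤
      ∑ i, (∑ v, w i v) * finiteKL (normalized (w i)) r := by
  rw [finiteKL_compensation_identity hw hwr, le_add_iff_nonneg_right]
  refine sum_mul_finiteKL_normalized_nonneg (sum_nonneg fun i _ => hw i) hr hr_sum fun v hv => ?_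
  rw [Finset.sum_apply]
  exact sum_eq_zero fun i _ => hwr i v hv

end FiniteKL

section Conditionals

variable (p : A × B × C × D × E × V → ℝ)

omit [Fintype A] [Fintype D] in
lemma condAD_eq_normalized (a : A) (d : D) :
    condAD p a d = normalized (∑ x : B × C × E, fun v => p (a, x.1, x.2.1, d, x.2.2, v)) := by
  ext v
  simp only [normalized, Finset.sum_apply]
  rw [sum_comm]
  simp only [condAD, Fintype.sum_prod_type]

omit [Fintype A] [Fintype B] [Fintype D] [Fintype E] in
lemma condABDE_eq_normalized (a : A) (b : B) (d : D) (e : E) :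
    condABDE p a b d e = normalized (∑ c, fun v => p (a, b, c, d, e, v)) := by
  ext v
  simp only [normalized, Finset.sum_apply]
  rw [sum_comm, condABDE]

variable {p}

omit [Fintype A] [Fintype B] [Fintype C] in
lemma margABCDE_mul_finiteKL_condABC {a : A} {b : B} {c : C} {d : D} {e : E}
    (hparents : margABCDE p a b c d e ≠ 0 → ∀ v, condABCDE p a b c d e v = condABC p a b c v)
    (r : V → ℝ) :
    margABCDE p a b c d e * finiteKL (condABC p a b c) r =
      (∑ v, p (a, b, c, d, e, v)) * finiteKL (normalized fun v => p (a, b, c, d, e, v)) r := by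
  rcases eq_or_ne (margABCDE p a b c d e) 0 with hmass | hmass
  · rw [hmass, zero_mul, ← margABCDE, hmass, zero_mul]
  · rw [← funext (hparents hmass)]
    rfl

omit [Fintype A] in
lemma sum_margABCDE_mul_finiteKL_condABDE_le (hp : 0 ≤ p) (a : A) (b : B) (d : D) (e : E)
    (hparents : ∀ c, margABCDE p a b c d e ≠ 0 →
      ∀ v, condABCDE p a b c d e v = condABC p a b c v) :
    ∑ c, margABCDE p a b c d e * finiteKL (condABC p a b c) (condABDE p a b d e) ≤
      ∑ c, margABCDE p a b c d e * finiteKL (condABC p a b c) (condAD p a d) := by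
  simp only [margABCDE_mul_finiteKL_condABC (hparents _), condABDE_eq_normalized,
    condAD_eq_normalized]
  refine sum_mul_finiteKL_normalized_sum_le (fun c v => hp _)
    (normalized_nonneg (sum_nonneg fun x _ v => hp _)) (sum_normalized_le_one _) fun c v hv => ?_
  exact eq_zero_of_normalized_sum_eq_zero
    (w := fun (x : B × C × E) v => p (a, x.1, x.2.1, d, x.2.2, v)) (fun x v => hp _) hv (b, c, e)

end Conditionals

/-- Where `margABCDE` vanishes, `condABCDE` is the junk value `0 / 0 = 0`; hence the guard in
`hparents`. -/
theorem interpretability_accuracy_tradeoff_general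
    (p : A × B × C × D × E × V → ℝ)
    (hp : 0 ≤ p)
    (hparents : ∀ a b c d e, margABCDE p a b c d e ≠ 0 →
      ∀ v, condABCDE p a b c d e v = condABC p a b c v) :
    (∑ a, ∑ b, ∑ c, ∑ d, ∑ e, margABCDE p a b c d e *
        ∑ v, condABC p a b c v * Real.log (condABC p a b c v / condAD p a d v))
      ≥ ∑ a, ∑ b, ∑ c, ∑ d, ∑ e, margABCDE p a b c d e *
        ∑ v, condABC p a b c v * Real.log (condABC p a b c v / condABDE p a b d e v) := by
  refine sum_le_sum fun a _ => sum_le_sum fun b _ => ?_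
  refine sum_comm_cycle.symm.trans_le (le_of_le_of_eq ?_ sum_comm_cycle)
  exact sum_le_sum fun d _ => sum_le_sum fun e _ =>
    sum_margABCDE_mul_finiteKL_condABDE_le hp a b d e fun c => hparents a b c d e

/-- the interpretability–accuracy trade-off. If the ground-truth parents of `V`
are the `A`, `B`, `C` coordinates, and the false parents `D` (resp. `D` and `E`) carry no
information about `V` beyond `A` (resp. beyond `A` and `B`), then predicting with the
smaller parent set `{A, D}` incurs at least as large an expected KL divergence from the
ground-truth posterior `p(·|a,b,c)` as predicting with the larger set `{A, B, D, E}`. -/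
theorem interpretability_accuracy_tradeoff
    [Nonempty A] [Nonempty B] [Nonempty C] [Nonempty D] [Nonempty E] [Nonempty V]
    (p : A × B × C × D × E × V → ℝ)
    (hpos : ∀ x, 0 < p x)
    (hsum : ∑ x, p x = 1)
    (hparents : ∀ a b c d e v, condABCDE p a b c d e v = condABC p a b c v)
    (hAD : ∀ a d v, condAD p a d v = condA p a v)
    (hABDE : ∀ a b d e v, condABDE p a b d e v = condAB p a b v) :
    (∑ a, ∑ b, ∑ c, ∑ d, ∑ e, margABCDE p a b c d e *
        ∑ v, condABC p a b c v * Real.log (condABC p a b c v / condAD p a d v))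
      ≥ ∑ a, ∑ b, ∑ c, ∑ d, ∑ e, margABCDE p a b c d e *
        ∑ v, condABC p a b c v * Real.log (condABC p a b c v / condABDE p a b d e v) := by
  exact interpretability_accuracy_tradeoff_general p (fun x => (hpos x).le)
    fun a b c d e _ => hparents a b c d e
end

section
/- Let U, W, V be finite nonempty types and let p and p* be probability mass functions with full support on U × W × V that share the same conditional kernel: p(v | u, w) = p*(v | u, w) for all u, w, v. Then V is conditionally independent of U given W under p if and only if V is conditionally independent of U given W under p*; that is, (∀ u w v, p(v | u, w) = p(v | w)) ↔ (∀ u w v, p*(v | u, w) = p*(v | w)). -/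
open Finset

variable {U W V : Type*} [Fintype U] [Fintype W] [Fintype V]

/-- the conditional kernel `q(v | u, w)` -/
noncomputable def condUW (q : U × W × V → ℝ) (u : U) (w : W) (v : V) : ℝ :=
  q (u, w, v) / ∑ v', q (u, w, v')

/-- the conditional marginal `q(v | w)` -/
noncomputable def condW (q : U × W × V → ℝ) (w : W) (v : V) : ℝ :=
  (∑ u, q (u, w, v)) / ∑ u, ∑ v', q (u, w, v')

section

omit [Fintype W]

theorem condW_eq_centerMass (q : U × W × V → ℝ) (w : W) (v : V)
    (hq : ∀ u, ∑ v', q (u, w, v') ≠ 0) :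
    condW q w v = univ.centerMass (fun u ↦ ∑ v', q (u, w, v')) (fun u ↦ condUW q u w v) := by
  have chain_rule (u : U) : (∑ v', q (u, w, v')) * condUW q u w v = q (u, w, v) :=
    mul_div_cancel₀ _ (hq u)
  simp only [centerMass, smul_eq_mul, chain_rule, condW, div_eq_inv_mul]

theorem condW_eq_of_forall_condUW_eq [Nonempty U] (q : U × W × V → ℝ) (w : W) (v : V) (c : ℝ)
    (hq : ∀ u, 0 < ∑ v', q (u, w, v')) (hc : ∀ u, condUW q u w v = c) :
    condW q w v = c := by
  have total_pos : 0 < ∑ u, ∑ v', q (u, w, v') := sum_pos (fun u _ ↦ hq u) univ_nonempty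
  rw [condW_eq_centerMass q w v fun u ↦ (hq u).ne']
  simp only [hc]
  exact centerMass_const total_pos.ne' c

/-- The right-hand side involves `q` only through its kernel, so it does not see the distribution of
the inputs. -/
theorem forall_condUW_eq_condW_iff (q : U × W × V → ℝ) (hq : ∀ u w, 0 < ∑ v, q (u, w, v)) :
    (∀ u w v, condUW q u w v = condW q w v) ↔
      ∀ u u' w v, condUW q u w v = condUW q u' w v := by
  refine ⟨fun h u u' w v ↦ (h u w v).trans (h u' w v).symm, fun h u w v ↦ ?_⟩
  have : Nonempty U := ⟨u⟩
  exact (condW_eq_of_forall_condUW_eq q w v _ (hq · w) (h · u w v)).symm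

theorem cond_indep_invariance_general (p pstar : U × W × V → ℝ)
    (hp : ∀ u w, 0 < ∑ v, p (u, w, v)) (hpstar : ∀ u w, 0 < ∑ v, pstar (u, w, v))
    (hkernel : ∀ u w v, condUW p u w v = condUW pstar u w v) :
    (∀ u w v, condUW p u w v = condW p w v) ↔
      (∀ u w v, condUW pstar u w v = condW pstar w v) := by
  rw [forall_condUW_eq_condW_iff p hp, forall_condUW_eq_condW_iff pstar hpstar]
  simp only [hkernel]

end

/-- if two full-support pmfs `p` and `p⋆` on `U × W × V` share the same
conditional kernel `p(v|u,w) = p⋆(v|u,w)`, then `V` is conditionally independent of `U`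
given `W` under `p` if and only if it is under `p⋆`. -/
theorem cond_indep_invariance
    [Nonempty U] [Nonempty W] [Nonempty V]
    (p pstar : U × W × V → ℝ)
    (hppos : ∀ x, 0 < p x) (hpsum : ∑ x, p x = 1)
    (hspos : ∀ x, 0 < pstar x) (hssum : ∑ x, pstar x = 1)
    (hkernel : ∀ u w v, condUW p u w v = condUW pstar u w v) :
    (∀ u w v, condUW p u w v = condW p w v) ↔
      (∀ u w v, condUW pstar u w v = condW pstar w v) := by
  exact cond_indep_invariance_general p pstar
    (fun _ _ ↦ sum_pos (fun _ _ ↦ hppos _) univ_nonempty)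
    (fun _ _ ↦ sum_pos (fun _ _ ↦ hspos _) univ_nonempty) hkernel
end

section
/- Let I be a finite index set, let (X_i)_{i∈I} and V be finite nonempty types, and let p and p* be probability mass functions with full support on (Π_{i∈I} X_i) × V that share the same conditional kernel: p(v | x) = p*(v | x) for all x ∈ Π_{i∈I} X_i and v ∈ V. For a pmf q, define the parent set PA_q(V) = { i ∈ I : ¬(∀ x v, q(v | x) = q(v | x_{-i})) }, where x_{-i} denotes the coordinates of x other than i and q(v | x_{-i}) is the conditional probability of V given those coordinates. Then PA_p(V) = PA_{p*}(V). -/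
open Finset

variable {I : Type*} [Fintype I] [DecidableEq I] {X : I → Type*} [∀ i, Fintype (X i)]
  [∀ i, DecidableEq (X i)] {V : Type*} [Fintype V]

/-- the joint weight of `(x_S, v)`: the marginal of `q` on the coordinates in `S`
together with `V`, evaluated at the restriction of `x` to `S` and at `v` -/
noncomputable def margS (q : (∀ i, X i) × V → ℝ) (S : Finset I) (x : ∀ i, X i) (v : V) : ℝ :=
  ∑ y : ∀ i, X i, if ∀ i ∈ S, y i = x i then q (y, v) else 0

/-- the conditional `q(v | x_{-i})`: the conditional probability of `V` given all
coordinates of `x` other than `i` -/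
noncomputable def condMinus (q : (∀ i, X i) × V → ℝ) (i : I) (x : ∀ i, X i) (v : V) : ℝ :=
  margS q (Finset.univ.erase i) x v / ∑ v', margS q (Finset.univ.erase i) x v'

/-- the conditional `q(v | x)` given all input coordinates -/
noncomputable def condAll (q : (∀ i, X i) × V → ℝ) (x : ∀ i, X i) (v : V) : ℝ :=
  q (x, v) / ∑ v', q (x, v')

/-- the parent set of `V` under `q`: the set of indices `i` such that `V` is *not*
conditionally independent of the `i`-th coordinate given the remaining coordinates -/
def parentSet (q : (∀ i, X i) × V → ℝ) : Set I :=
  { i : I | ¬ ∀ (x : ∀ i, X i) (v : V), condAll q x v = condMinus q i x v }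

/-!
When every input `x` has positive weight, `q(v | x_S)` is a weighted average of `q(v | y)` over the
inputs `y` agreeing with `x` on `S`. Hence `q(v | x) = q(v | x_S)` holds identically iff the kernel
`q(· | x)` is a function of `x_S` alone, which for `S = I \ {i}` expresses membership of `i` in the
parent set through the kernel.
-/

/-- The conditional probability `q(v | x_S)` of `V` given the coordinates of `x` in `S`, which
interpolates between `condMinus` and `condAll`. It takes the junk value `0` where `x_S` has total
weight `0`. -/
noncomputable def condOn (q : (∀ i, X i) × V → ℝ) (S : Finset I) (x : ∀ i, X i) (v : V) : ℝ :=
  margS q S x v / ∑ v', margS q S x v'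

section Marginal

variable (q : (∀ i, X i) × V → ℝ) (S : Finset I)

omit [Fintype V] in
theorem margS_eq_sum_filter (x : ∀ i, X i) (v : V) :
    margS q S x v = ∑ y with ∀ i ∈ S, y i = x i, q (y, v) :=
  (sum_filter _ _).symm

theorem sum_margS_eq_sum_filter (x : ∀ i, X i) :
    ∑ v, margS q S x v = ∑ y with ∀ i ∈ S, y i = x i, ∑ v, q (y, v) := by
  simp only [margS_eq_sum_filter]
  exact sum_comm

omit [Fintype V] in
theorem dependsOn_margS : DependsOn (margS q S) (S : Set I) := by
  intro x y hxy
  have same_fiber (z : ∀ i, X i) : (∀ i ∈ S, z i = x i) ↔ ∀ i ∈ S, z i = y i :=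
    forall₂_congr fun i hi => by rw [hxy i hi]
  funext v
  simp only [margS, same_fiber]

theorem dependsOn_condOn : DependsOn (condOn q S) (S : Set I) := by
  intro x y hxy
  funext v
  simp only [condOn, dependsOn_margS q S hxy]

end Marginal

section PositiveInputWeights

variable {q : (∀ i, X i) × V → ℝ}

theorem sum_margS_pos (hq : ∀ x, 0 < ∑ v, q (x, v)) (S : Finset I) (x : ∀ i, X i) :
    0 < ∑ v, margS q S x v := by
  rw [sum_margS_eq_sum_filter]
  exact sum_pos (fun y _ => hq y) ⟨x, by simp⟩

theorem condOn_eq_of_forall_condAll_eq (hq : ∀ x, 0 < ∑ v, q (x, v)) {S : Finset I}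
    {x : ∀ i, X i} {v : V} {c : ℝ} (hc : ∀ y, (∀ i ∈ S, y i = x i) → condAll q y v = c) :
    condOn q S x v = c := by
  rw [condOn, div_eq_iff (sum_margS_pos hq S x).ne']
  calc margS q S x v
      = ∑ y with ∀ i ∈ S, y i = x i, q (y, v) := margS_eq_sum_filter q S x v
    _ = ∑ y with ∀ i ∈ S, y i = x i, c * ∑ v', q (y, v') :=
        sum_congr rfl fun y hy => (div_eq_iff (hq y).ne').1 (hc y (mem_filter.1 hy).2)
    _ = c * ∑ v', margS q S x v' := by rw [← mul_sum, sum_margS_eq_sum_filter]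

theorem condAll_eq_condOn_iff_dependsOn (hq : ∀ x, 0 < ∑ v, q (x, v)) (S : Finset I) :
    condAll q = condOn q S ↔ DependsOn (condAll q) (S : Set I) := by
  constructor
  · intro h
    rw [h]
    exact dependsOn_condOn q S
  · intro hdep
    funext x v
    exact (condOn_eq_of_forall_condAll_eq hq fun y hy => congrFun (hdep hy) v).symm

theorem mem_parentSet_iff_not_dependsOn (hq : ∀ x, 0 < ∑ v, q (x, v)) (i : I) :
    i ∈ parentSet q ↔ ¬ DependsOn (condAll q) (univ.erase i : Finset I) := by
  rw [← condAll_eq_condOn_iff_dependsOn hq]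
  simp only [funext_iff]
  rfl

end PositiveInputWeights

theorem parent_set_invariance_general
    {p pstar : (∀ i, X i) × V → ℝ}
    (hp : ∀ x, 0 < ∑ v, p (x, v)) (hpstar : ∀ x, 0 < ∑ v, pstar (x, v))
    (hkernel : ∀ x v, condAll p x v = condAll pstar x v) :
    parentSet p = parentSet pstar := by
  have kernel_eq : condAll p = condAll pstar := funext₂ hkernel
  ext i
  rw [mem_parentSet_iff_not_dependsOn hp, mem_parentSet_iff_not_dependsOn hpstar, kernel_eq]

/-- if two full-support pmfs `p` and `p⋆` on `(Π i, X i) × V` share the same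
conditional kernel `p(v|x) = p⋆(v|x)`, then the parent sets of `V` identified by the
conditional-independence rule coincide: `PA_p(V) = PA_{p⋆}(V)`. -/
theorem parent_set_invariance
    [∀ i, Nonempty (X i)] [Nonempty V]
    (p pstar : (∀ i, X i) × V → ℝ)
    (hppos : ∀ z, 0 < p z) (hpsum : ∑ z, p z = 1)
    (hspos : ∀ z, 0 < pstar z) (hssum : ∑ z, pstar z = 1)
    (hkernel : ∀ x v, condAll p x v = condAll pstar x v) :
    parentSet p = parentSet pstar :=
  parent_set_invariance_general (fun _ => sum_pos (fun _ _ => hppos _) univ_nonempty)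
    (fun _ => sum_pos (fun _ _ => hspos _) univ_nonempty) hkernel
end
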